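/- The monoid M_1 is 2-aligned: for all p, q ∈ M_1, either pM_1 ∩ qM_1 = ∅ or there exist r_1, r_2 ∈ M_1 with pM_1 ∩ qM_1 = r_1M_1 ∪ r_2M_1. -/

import Mathlib

namespace Malcev

/-- The alphabet `X_n`: letters `a, b, c, d` together with `A_i, B_i, C_i, D_i`
for `i` ranging over `Fin n` (so `A ⟨0, _⟩` represents `A_1`, etc.). -/
inductive Letter (n : ℕ) : Type
  | a | b | c | d
  | A (i : Fin n) | B (i : Fin n) | C (i : Fin n) | D (i : Fin n)
  deriving DecidableEq

open FreeMonoid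

/-- The defining relations `ρ_n`. -/
inductive rel (n : ℕ) : FreeMonoid (Letter n) → FreeMonoid (Letter n) → Prop
  | da (h : 0 < n) :
      rel n (of .d * of .a) (of (.A ⟨0, h⟩) * of (.C ⟨0, h⟩))
  | AD (i : ℕ) (h : i + 1 < n) :
      rel n (of (.A ⟨i, Nat.lt_of_succ_lt h⟩) * of (.D ⟨i, Nat.lt_of_succ_lt h⟩))
            (of (.A ⟨i + 1, h⟩) * of (.C ⟨i + 1, h⟩))
  | An (h : 0 < n) :
      rel n (of (.A ⟨n - 1, Nat.sub_lt h Nat.one_pos⟩) * of (.D ⟨n - 1, Nat.sub_lt h Nat.one_pos⟩))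
            (of .d * of .b)
  | cb (h : 0 < n) :
      rel n (of .c * of .b)
            (of (.B ⟨n - 1, Nat.sub_lt h Nat.one_pos⟩) * of (.D ⟨n - 1, Nat.sub_lt h Nat.one_pos⟩))
  | BC (i : ℕ) (h : i + 1 < n) :
      rel n (of (.B ⟨i + 1, h⟩) * of (.C ⟨i + 1, h⟩))
            (of (.B ⟨i, Nat.lt_of_succ_lt h⟩) * of (.D ⟨i, Nat.lt_of_succ_lt h⟩))

/-- The congruence on the free monoid generated by `ρ_n`. -/
def Mcon (n : ℕ) : Con (FreeMonoid (Letter n)) := conGen (rel n)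

/-- The presented monoid `M_n = Mon⟨X_n | ρ_n⟩`. -/
abbrev Mn (n : ℕ) : Type := (Mcon n).Quotient

/-- The quotient (natural) map `X_n* → M_n`. -/
def mk (n : ℕ) : FreeMonoid (Letter n) →* Mn n := (Mcon n).mk'

/-- The image in `M_n` of a single letter. -/
def gen {n : ℕ} (x : Letter n) : Mn n := mk n (of x)

/-- The image in `M_n` of a word (given as a list of letters). -/
def word {n : ℕ} (w : List (Letter n)) : Mn n := mk n (ofList w)

/-- The set `P_n = {c, d, A_1, …, A_n, B_1, …, B_n}`. -/
def inP {n : ℕ} : Letter n → Prop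
  | .c => True | .d => True | .A _ => True | .B _ => True | _ => False

/-- The set `Q_n = {a, b, C_1, …, C_n, D_1, …, D_n}`. -/
def inQ {n : ℕ} : Letter n → Prop
  | .a => True | .b => True | .C _ => True | .D _ => True | _ => False

/-- `inR x y` means the two-letter word `xy` belongs to
`R_n = {db, A_1C_1, …, A_nC_n, B_1D_1, …, B_nD_n}`. -/
def inR {n : ℕ} : Letter n → Letter n → Prop
  | .d, .b => True
  | .A i, .C j => i = j
  | .B i, .D j => i = j
  | _, _ => False

/-- `inL x y` means the two-letter word `xy` belongs to
`L_n = {cb, da, A_1D_1, …, A_nD_n, B_2C_2, …, B_nC_n}`. -/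
def inL {n : ℕ} : Letter n → Letter n → Prop
  | .c, .b => True
  | .d, .a => True
  | .A i, .D j => i = j
  | .B i, .C j => i = j ∧ 1 ≤ i.val
  | _, _ => False

/-- A word is in left normal form if no two consecutive letters form a word in `R_n`. -/
def LeftNormal {n : ℕ} (w : List (Letter n)) : Prop :=
  List.Chain' (fun x y => ¬ inR x y) w

/-- `v ∈ M_n` is an intersection base if some word `a_1 ⋯ a_m` (`m ≥ 2`) in left
normal form equals `v` in `M_n` and its final two letters form a word in `L_n`. -/
def IsIntersectionBase {n : ℕ} (v : Mn n) : Prop :=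
  ∃ (w : List (Letter n)) (x y : Letter n),
    LeftNormal (w ++ [x, y]) ∧ word (w ++ [x, y]) = v ∧ inL x y

/-- The principal right ideal `pM_n`. -/
def rIdeal {n : ℕ} (p : Mn n) : Set (Mn n) := {x | ∃ m, x = p * m}

/-!
Every defining relation of `M_n` equates a word of `L_n` with a word of `R_n`, and this matches the
two sets of words bijectively. The first letters of these words lie in `P_n` and the second ones in
`Q_n`, so relators never overlap. Hence two words are equal in `M_n` exactly when one arises
from the other by applying relations at disjoint places. If `pm = qn` with `p` no longer than `q`,
then either `p` left divides `q`, or one of these relations straddles both cuts: `p = ux` and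
`q = ux'` for letters `x ≠ x'`. In the second case the common right multiples of `p` and `q` are the
right multiples of the elements `uxy`, where `xy` is one side of a relation `xy = x'y'`, and every
letter `x` is the first letter of at most two relators.
-/

section SwapEq

variable {α : Type*} {S : α × α → α × α → Prop}

/-- A system of relations between two-letter words whose relators do not overlap, closed under
symmetry and, apart from trivial relations, under transitivity. Here `S (x, y) (x', y')` encodes
the relation `xy = x'y'`. -/
structure IsSwapSystem (S : α × α → α × α → Prop) : Prop where
  symm : ∀ {e f}, S e f → S f e
  eq_or_trans : ∀ {e f g}, S e f → S f g → e = g ∨ S e g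
  not_overlap : ∀ {x y z e f}, S (x, y) e → ¬ S (y, z) f

/-- Two words are related when one arises from the other by applying relations of `S` at pairwise
disjoint places. -/
inductive SwapEq (S : α × α → α × α → Prop) : List α → List α → Prop
  | nil : SwapEq S [] []
  | cons (x : α) {u v : List α} : SwapEq S u v → SwapEq S (x :: u) (x :: v)
  | swap {x y x' y' : α} {u v : List α} :
      S (x, y) (x', y') → SwapEq S u v → SwapEq S (x :: y :: u) (x' :: y' :: v)

/-- Left divisibility of words modulo `SwapEq S`. -/
def LeftDvd (S : α × α → α × α → Prop) (p w : List α) : Prop :=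
  ∃ m, SwapEq S (p ++ m) w

namespace SwapEq

theorem refl (u : List α) : SwapEq S u u := by
  induction u with
  | nil => exact nil
  | cons x u ih => exact cons x ih

theorem symm (hS : IsSwapSystem S) {u v : List α} (h : SwapEq S u v) : SwapEq S v u := by
  induction h with
  | nil => exact nil
  | cons x _ ih => exact cons x ih
  | swap hs _ ih => exact swap (hS.symm hs) ih

theorem append {u v u' v' : List α} (h : SwapEq S u v) (h' : SwapEq S u' v') :
    SwapEq S (u ++ u') (v ++ v') := by
  induction h with
  | nil => exact h'
  | cons x _ ih => exact cons x ih
  | swap hs _ ih => exact swap hs ih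

theorem length_eq {u v : List α} (h : SwapEq S u v) : u.length = v.length := by
  induction h with
  | nil => rfl
  | cons _ _ ih => exact congrArg (· + 1) ih
  | swap _ _ ih => exact congrArg (· + 2) ih

theorem exists_of_cons_left (hS : IsSwapSystem S) {x y : α} {e : α × α} (hs : S (x, y) e)
    {u w : List α} (h : SwapEq S (y :: u) w) : ∃ w', w = y :: w' ∧ SwapEq S u w' := by
  cases h with
  | cons _ h => exact ⟨_, rfl, h⟩
  | swap hs' _ => exact (hS.not_overlap hs hs').elim

theorem trans (hS : IsSwapSystem S) {u v w : List α} (h : SwapEq S u v) (h' : SwapEq S v w) :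
    SwapEq S u w := by
  induction h generalizing w with
  | nil => exact h'
  | cons x h ih =>
    cases h' with
    | cons _ h' => exact cons x (ih h')
    | swap hs h' =>
      obtain ⟨_, rfl, -⟩ := exists_of_cons_left hS hs (h.symm hS)
      obtain ⟨_, hw, h''⟩ := exists_of_cons_left hS hs (ih (cons _ h'))
      cases hw
      exact swap hs h''
  | swap hs _ ih =>
    cases h' with
    | cons _ h' =>
      obtain ⟨_, rfl, h''⟩ := exists_of_cons_left hS (hS.symm hs) h'
      exact swap hs (ih h'')
    | swap hs' h' =>
      rcases hS.eq_or_trans hs hs' with heq | hs''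
      · cases heq
        exact cons _ (cons _ (ih h'))
      · exact swap hs'' (ih h')

/-- In the second case a swap straddles the cut. -/
theorem append_cases : ∀ {p q m n : List α}, p.length = q.length →
    SwapEq S (p ++ m) (q ++ n) →
    (SwapEq S p q ∧ SwapEq S m n) ∨
    ∃ u x y v u' x' y' v', S (x, y) (x', y') ∧ SwapEq S u u' ∧ SwapEq S v v' ∧
      p = u ++ [x] ∧ m = y :: v ∧ q = u' ++ [x'] ∧ n = y' :: v'
  | [], [], _, _, _, h => .inl ⟨nil, h⟩
  | [_], [_], _, _, _, cons x h => .inl ⟨cons x nil, h⟩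
  | [x], [x'], y :: v, y' :: v', _, swap hs h =>
    .inr ⟨[], x, y, v, [], x', y', v', hs, nil, h, rfl, rfl, rfl, rfl⟩
  | z :: t :: p, _ :: t' :: q, _, _, hl, cons _ h => by
    rcases append_cases (p := t :: p) (q := t' :: q) (Nat.succ.inj hl) h with
      ⟨hpq, hmn⟩ | ⟨u, x, y, v, u', x', y', v', hs, hu, hv, hp, rfl, hq, rfl⟩
    · exact .inl ⟨cons z hpq, hmn⟩
    · exact .inr ⟨z :: u, x, y, v, z :: u', x', y', v', hs, cons z hu, hv,
        congrArg (z :: ·) hp, rfl, congrArg (z :: ·) hq, rfl⟩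
  | z :: t :: p, z' :: t' :: q, _, _, hl, swap hs₀ h => by
    rcases append_cases (Nat.succ.inj (Nat.succ.inj hl)) h with
      ⟨hpq, hmn⟩ | ⟨u, x, y, v, u', x', y', v', hs, hu, hv, rfl, rfl, rfl, rfl⟩
    · exact .inl ⟨swap hs₀ hpq, hmn⟩
    · exact .inr ⟨z :: t :: u, x, y, v, z' :: t' :: u', x', y', v', hs, swap hs₀ hu, hv,
        rfl, rfl, rfl, rfl⟩

theorem last_eq (hS : IsSwapSystem S) {u u' : List α} {x x' y : α} {e : α × α}
    (hs : S (x, y) e) (h : SwapEq S (u ++ [x]) (u' ++ [x'])) : x = x' := by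
  have hl : u.length = u'.length := by simpa using h.length_eq
  rcases append_cases hl h with ⟨-, hx⟩ | ⟨_, _, _, _, _, _, _, _, hs', -, -, -, hx, -⟩
  · cases hx
    rfl
  · cases hx
    exact (hS.not_overlap hs' hs).elim

theorem append_pair (u : List α) {x y x' y' : α} (hs : S (x, y) (x', y')) (v : List α) :
    SwapEq S (u ++ x :: y :: v) (u ++ x' :: y' :: v) :=
  (refl u).append (swap hs (refl v))

theorem leftDvd_or_exists_append_singleton (hS : IsSwapSystem S) {p m q n : List α}
    (hl : p.length ≤ q.length) (h : SwapEq S (p ++ m) (q ++ n)) :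
    LeftDvd S p q ∨ ∃ u x y x' y', S (x, y) (x', y') ∧ x ≠ x' ∧
      SwapEq S p (u ++ [x]) ∧ SwapEq S q (u ++ [x']) := by
  obtain ⟨q₁, q₂, rfl, hq₁⟩ : ∃ q₁ q₂, q = q₁ ++ q₂ ∧ p.length = q₁.length :=
    ⟨q.take p.length, q.drop p.length, (List.take_append_drop _ _).symm, by simp [hl]⟩
  rw [List.append_assoc] at h
  rcases append_cases hq₁ h with
    ⟨hpq, -⟩ | ⟨u, x, y, v, u', x', y', v', hs, hu, -, rfl, -, rfl, hn⟩
  · exact .inl ⟨q₂, hpq.append (refl q₂)⟩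
  rcases q₂ with _ | ⟨z, q₂⟩
  · rw [List.append_nil]
    by_cases hx : x = x'
    · subst hx
      exact .inl ⟨[], by simpa only [List.append_nil] using hu.append (refl [x])⟩
    · exact .inr ⟨u, x, y, x', y', hs, hx, refl _, (hu.symm hS).append (refl [x'])⟩
  · obtain ⟨rfl, -⟩ := List.cons.inj hn
    exact .inl ⟨y :: q₂, by simpa using hu.append (swap hs (refl q₂))⟩

end SwapEq

theorem leftDvd_append_singleton_and_iff (hS : IsSwapSystem S) {x y₀ x' : α} {e : α × α}
    (hs₀ : S (x, y₀) e) (hx : x ≠ x') {u w : List α} :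
    LeftDvd S (u ++ [x]) w ∧ LeftDvd S (u ++ [x']) w ↔
      ∃ y y', S (x, y) (x', y') ∧ LeftDvd S (u ++ [x, y]) w := by
  constructor
  · rintro ⟨⟨m, hm⟩, n, hn⟩
    rcases SwapEq.append_cases (by simp) (hm.trans hS (hn.symm hS)) with
      ⟨hux, -⟩ | ⟨u₁, x₁, y, v, u₁', x₁', y', v', hs, -, -, hp, rfl, hq, rfl⟩
    · exact (hx (hux.last_eq hS hs₀)).elim
    · obtain ⟨rfl, hx₁⟩ := List.append_inj' hp rfl
      obtain ⟨-, hx₁'⟩ := List.append_inj' hq rfl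
      cases hx₁
      cases hx₁'
      exact ⟨y, y', hs, v, by simpa using hm⟩
  · rintro ⟨y, y', hs, m, hm⟩
    have hm' : SwapEq S (u ++ x :: y :: m) w := by simpa using hm
    exact ⟨⟨y :: m, by simpa using hm'⟩, y' :: m,
      by simpa using (SwapEq.append_pair u (hS.symm hs) m).trans hS hm'⟩

/-- `SwapEq S` as a congruence on the free monoid. -/
def swapCon (hS : IsSwapSystem S) : Con (FreeMonoid α) where
  r u v := SwapEq S u.toList v.toList
  iseqv := ⟨fun _ => SwapEq.refl _, SwapEq.symm hS, SwapEq.trans hS⟩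
  mul' h h' := h.append h'

theorem swapCon_le (hS : IsSwapSystem S) {c : Con (FreeMonoid α)}
    (hc : ∀ x y x' y', S (x, y) (x', y') → c (of x * of y) (of x' * of y')) :
    swapCon hS ≤ c := by
  intro u v (h : SwapEq S u.toList v.toList)
  suffices ∀ {u v : List α}, SwapEq S u v → c (ofList u) (ofList v) from this h
  intro u v h
  induction h with
  | nil => exact c.refl _
  | cons x _ ih => exact c.mul (c.refl (of x)) ih
  | swap hs _ ih => exact c.mul (hc _ _ _ _ hs) ih

end SwapEq

variable {n : ℕ}

theorem inL.inP_inQ {x y : Letter n} (h : inL x y) : inP x ∧ inQ y := by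
  cases x <;> cases y <;> first | exact ⟨trivial, trivial⟩ | exact h.elim

theorem inR.inP_inQ {x y : Letter n} (h : inR x y) : inP x ∧ inQ y := by
  cases x <;> cases y <;> first | exact ⟨trivial, trivial⟩ | exact h.elim

theorem inP.not_inQ {x : Letter n} (h : inP x) : ¬ inQ x := by
  cases x <;> first | exact id | exact h.elim

theorem inL.not_inR {x y : Letter n} (h : inL x y) : ¬ inR x y := by
  cases x <;> cases y <;> first | exact id | exact h.elim

theorem exists_eq_or_eq_of_inL_or_inR (x : Letter n) :
    ∃ y₁ y₂ : Letter n, ∀ y, inL x y ∨ inR x y → y = y₁ ∨ y = y₂ := by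
  cases x with
  | d => exact ⟨.a, .b, fun y => by cases y <;> simp [inL, inR]⟩
  | A i => exact ⟨.C i, .D i, fun y => by cases y <;> simp +contextual [inL, inR]⟩
  | B i => exact ⟨.C i, .D i, fun y => by cases y <;> simp +contextual [inL, inR]⟩
  | _ => exact ⟨.b, .b, fun y => by cases y <;> simp [inL, inR]⟩

theorem of_mul_of_inj {α : Type*} {x y x' y' : α} :
    of x * of y = of x' * of y' ↔ x = x' ∧ y = y' := by
  rw [← toList.injective.eq_iff]
  simp

theorem rel.exists_inL_inR {u v : FreeMonoid (Letter n)} (h : rel n u v) :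
    ∃ x y x' y', u = of x * of y ∧ v = of x' * of y' ∧ inL x y ∧ inR x' y' := by
  cases h <;> exact ⟨_, _, _, _, rfl, rfl, by simp [inL], by simp [inR]⟩

theorem rel.right_unique {u v v' : FreeMonoid (Letter n)} (h : rel n u v) (h' : rel n u v') :
    v = v' := by
  cases h <;> cases h' <;> first | rfl | omega

theorem rel.left_unique {u u' v : FreeMonoid (Letter n)} (h : rel n u v) (h' : rel n u' v) :
    u = u' := by
  cases h <;> cases h' <;> first | rfl | omega

/-- The defining relations of `M_n` read in both directions, as a relation between pairs of
letters. -/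
def Swap (n : ℕ) (e f : Letter n × Letter n) : Prop :=
  rel n (of e.1 * of e.2) (of f.1 * of f.2) ∨ rel n (of f.1 * of f.2) (of e.1 * of e.2)

theorem rel.inL {x y : Letter n} {v : FreeMonoid (Letter n)} (h : rel n (of x * of y) v) :
    inL x y := by
  obtain ⟨_, _, _, _, hu, -, hL, -⟩ := h.exists_inL_inR
  obtain ⟨rfl, rfl⟩ := of_mul_of_inj.1 hu
  exact hL

theorem rel.inR {x y : Letter n} {u : FreeMonoid (Letter n)} (h : rel n u (of x * of y)) :
    inR x y := by
  obtain ⟨_, _, _, _, -, hv, -, hR⟩ := h.exists_inL_inR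
  obtain ⟨rfl, rfl⟩ := of_mul_of_inj.1 hv
  exact hR

theorem Swap.inL_or_inR {e f : Letter n × Letter n} (h : Swap n e f) :
    inL e.1 e.2 ∨ inR e.1 e.2 :=
  h.imp rel.inL rel.inR

theorem Swap.inP_inQ {e f : Letter n × Letter n} (h : Swap n e f) : inP e.1 ∧ inQ e.2 :=
  h.inL_or_inR.elim inL.inP_inQ inR.inP_inQ

theorem isSwapSystem_swap (n : ℕ) : IsSwapSystem (Swap n) where
  symm := Or.symm
  eq_or_trans := by
    rintro e f g (hef | hfe) (hfg | hgf)
    · exact (hfg.inL.not_inR hef.inR).elim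
    · exact .inl (Prod.ext_iff.2 (of_mul_of_inj.1 (hef.left_unique hgf)))
    · exact .inl (Prod.ext_iff.2 (of_mul_of_inj.1 (hfe.right_unique hfg)))
    · exact (hfe.inL.not_inR hgf.inR).elim
  not_overlap h h' := h'.inP_inQ.1.not_inQ h.inP_inQ.2

theorem Mcon_eq_swapCon (n : ℕ) : Mcon n = swapCon (isSwapSystem_swap n) := by
  refine le_antisymm (Con.conGen_le.2 fun u v h => ?_) (swapCon_le _ fun x y x' y' h => ?_)
  · obtain ⟨x, y, x', y', rfl, rfl, -⟩ := h.exists_inL_inR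
    exact .swap (.inl h) .nil
  · rcases h with h | h
    · exact ConGen.Rel.of _ _ h
    · exact (ConGen.Rel.of _ _ h).symm

theorem word_eq_iff {u v : List (Letter n)} : word u = word v ↔ SwapEq (Swap n) u v := by
  have hcon : word u = word v ↔ Mcon n (ofList u) (ofList v) := Con.eq _
  rw [hcon, Mcon_eq_swapCon]
  rfl

theorem word_append (u v : List (Letter n)) : word (u ++ v) = word u * word v :=
  map_mul (mk n) (ofList u) (ofList v)

theorem word_surjective : Function.Surjective (word (n := n)) :=
  (Con.mk'_surjective (c := Mcon n)).comp ofList.surjective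

theorem word_mem_rIdeal_iff {p w : List (Letter n)} :
    word w ∈ rIdeal (word p) ↔ LeftDvd (Swap n) p w := by
  constructor
  · rintro ⟨m, hm⟩
    obtain ⟨m, rfl⟩ := word_surjective m
    exact ⟨m, word_eq_iff.1 ((word_append p m).trans hm.symm)⟩
  · rintro ⟨m, hm⟩
    exact ⟨word m, (word_eq_iff.2 hm).symm.trans (word_append p m)⟩

theorem rIdeal_subset_of_mem {p q : Mn n} (h : q ∈ rIdeal p) : rIdeal q ⊆ rIdeal p := by
  obtain ⟨m, rfl⟩ := h
  rintro _ ⟨k, rfl⟩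
  exact ⟨m * k, mul_assoc p m k⟩

/-- The letters `y` such that `xy = x'y'` is a relation of `M_n` for some letter `y'`. -/
def swapLetters (x x' : Letter n) : Set (Letter n) :=
  {y | ∃ y', Swap n (x, y) (x', y')}

theorem exists_swapLetters_eq_pair {x x' : Letter n} (h : (swapLetters x x').Nonempty) :
    ∃ y₁ y₂, swapLetters x x' = {y₁, y₂} := by
  obtain ⟨y₁, y₂, hy⟩ := exists_eq_or_eq_of_inL_or_inR x
  have hsub : swapLetters x x' ⊆ {y₁, y₂} := fun y ⟨_, hs⟩ => hy y hs.inL_or_inR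
  rcases Set.subset_pair_iff_eq.1 hsub with h₀ | h₁ | h₂ | h₁₂
  · exact (h.ne_empty h₀).elim
  · exact ⟨y₁, y₁, by rw [h₁, Set.pair_eq_singleton]⟩
  · exact ⟨y₂, y₂, by rw [h₂, Set.pair_eq_singleton]⟩
  · exact ⟨y₁, y₂, h₁₂⟩

theorem rIdeal_append_singleton_inter {x x' : Letter n} (hx : x ≠ x')
    (h : (swapLetters x x').Nonempty) (u : List (Letter n)) :
    rIdeal (word (u ++ [x])) ∩ rIdeal (word (u ++ [x'])) =
      ⋃ y ∈ swapLetters x x', rIdeal (word (u ++ [x, y])) := by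
  obtain ⟨y₀, y₀', hs₀⟩ := h
  ext w
  obtain ⟨w, rfl⟩ := word_surjective w
  simp only [Set.mem_inter_iff, Set.mem_iUnion, word_mem_rIdeal_iff, swapLetters,
    Set.mem_ofPred_eq, leftDvd_append_singleton_and_iff (isSwapSystem_swap n) hs₀ hx,
    exists_and_right, exists_prop]

theorem rIdeal_word_inter_of_length_le {p q : List (Letter n)} (hl : p.length ≤ q.length) :
    rIdeal (word p) ∩ rIdeal (word q) = ∅ ∨
    ∃ r₁ r₂ : Mn n, rIdeal (word p) ∩ rIdeal (word q) = rIdeal r₁ ∪ rIdeal r₂ := by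
  rcases Set.eq_empty_or_nonempty (rIdeal (word p) ∩ rIdeal (word q)) with
    hempty | ⟨_, ⟨m, rfl⟩, k, hk⟩
  · exact .inl hempty
  right
  obtain ⟨m, rfl⟩ := word_surjective m
  obtain ⟨k, rfl⟩ := word_surjective k
  rw [← word_append, ← word_append, word_eq_iff] at hk
  rcases hk.leftDvd_or_exists_append_singleton (isSwapSystem_swap n) hl with
    hdvd | ⟨u, x, y, x', y', hs, hx, hp, hq⟩
  · exact ⟨word q, word q, by
      rw [Set.union_self, Set.inter_eq_right]
      exact rIdeal_subset_of_mem (word_mem_rIdeal_iff.2 hdvd)⟩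
  · have hne : (swapLetters x x').Nonempty := ⟨y, y', hs⟩
    obtain ⟨y₁, y₂, hy⟩ := exists_swapLetters_eq_pair hne
    exact ⟨word (u ++ [x, y₁]), word (u ++ [x, y₂]), by
      rw [word_eq_iff.2 hp, word_eq_iff.2 hq, rIdeal_append_singleton_inter hx hne, hy,
        Set.biUnion_pair]⟩

theorem M1_two_aligned_general (p q : Mn n) :
    rIdeal p ∩ rIdeal q = ∅ ∨
    ∃ r₁ r₂ : Mn n, rIdeal p ∩ rIdeal q = rIdeal r₁ ∪ rIdeal r₂ := by
  obtain ⟨p, rfl⟩ := word_surjective p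
  obtain ⟨q, rfl⟩ := word_surjective q
  rcases le_total p.length q.length with hl | hl
  · exact rIdeal_word_inter_of_length_le hl
  · rw [Set.inter_comm]
    exact rIdeal_word_inter_of_length_le hl

/-- the monoid `M_1` is `2`-aligned. -/
theorem M1_two_aligned (p q : Mn 1) :
    rIdeal p ∩ rIdeal q = ∅ ∨
    ∃ r₁ r₂ : Mn 1, rIdeal p ∩ rIdeal q = rIdeal r₁ ∪ rIdeal r₂ :=
  M1_two_aligned_general p q

end Malcev
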